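/- Uniqueness of the minimizer in small domains: Let 0 < L < 1/2 and L/2 < σ ≤ 1/2. If v ∈ Adm(L,σ) satisfies F^L(v) = 2L (which is the minimum value of F^L on Adm(L,σ)), then v(x) = σ for almost every x ∈ (0,L). -/

import Mathlib

open MeasureTheory Filter Set

noncomputable section

/-- `Adm L σ v` : `v` is admissible, i.e. `0 ≤ v ≤ 1` on `(0,L)`, `v` has finite pointwise
total variation on `(0,L)` and `∫_{(0,L)} v = σL`. -/
def Adm (L σ : ℝ) (v : ℝ → ℝ) : Prop :=
  (∀ x ∈ Set.Ioo 0 L, 0 ≤ v x ∧ v x ≤ 1) ∧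
  BoundedVariationOn v (Set.Ioo 0 L) ∧
  (∫ x in Set.Ioo 0 L, v x) = σ * L

/-- The limit functional `F^L(v) = 2·λ({x ∈ (0,L) : 0 < v(x) < 1}) + Var(v;(0,L))`. -/
def limitF (L : ℝ) (v : ℝ → ℝ) : ℝ :=
  2 * (volume {x ∈ Set.Ioo 0 L | 0 < v x ∧ v x < 1}).toReal +
    (eVariationOn v (Set.Ioo 0 L)).toReal

/-!
Write `t` for the measure of the transition set `{0 < v < 1}` and `V` for the variation, so that
`2 * t + V ≤ 2 * L < 1`. If `v` vanished somewhere, then `v ≤ V < 1` everywhere, hence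
`σ * L = ∫ v ≤ V * t ≤ 2 * t * (L - t) ≤ L ^ 2 / 2`, contradicting `L / 2 < σ`. The symmetry
`v ↦ 1 - v`, `σ ↦ 1 - σ` shows that `v` does not take the value `1` either. So `t = L`, which leaves
`V = 0`: `v` is constant, and its value is its mean `σ`.
-/

section BoundedVariation

variable {α : Type*} [LinearOrder α]

theorem eVariationOn_isometry_comp {E F : Type*} [PseudoEMetricSpace E] [PseudoEMetricSpace F]
    {φ : E → F} (hφ : Isometry φ) (f : α → E) (s : Set α) :
    eVariationOn (φ ∘ f) s = eVariationOn f s := by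
  simp only [eVariationOn, Function.comp_apply, hφ.edist_eq]

section SetIntegral

variable {E : Type*} [NormedAddCommGroup E] [NormedSpace ℝ E] [MeasurableSpace α] {μ : Measure α}
  {s : Set α} {f : α → E}

theorem norm_setIntegral_le_toReal_eVariationOn_mul (hf : BoundedVariationOn f s)
    (hs : MeasurableSet s) (hμs : μ s ≠ ⊤) {z : α} (hz : z ∈ s) (hfz : f z = 0) :
    ‖∫ x in s, f x ∂μ‖ ≤ (eVariationOn f s).toReal * μ.real (s ∩ Function.support f) := by
  have hsub : s ∩ Function.support f ⊆ s := inter_subset_left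
  have hbound (x) (hx : x ∈ s ∩ Function.support f) : ‖f x‖ ≤ (eVariationOn f s).toReal := by
    simpa only [hfz, dist_zero_right] using hf.dist_le hx.1 hz
  calc ‖∫ x in s, f x ∂μ‖ = ‖∫ x in s ∩ Function.support f, f x ∂μ‖ := by
        rw [setIntegral_eq_of_subset_of_forall_sdiff_eq_zero hs hsub fun x hx ↦
          Function.notMem_support.mp fun hfx ↦ hx.2 ⟨hx.1, hfx⟩]
    _ ≤ (eVariationOn f s).toReal * μ.real (s ∩ Function.support f) :=
        norm_setIntegral_le_of_norm_le_const (measure_lt_top_of_subset hsub hμs) hbound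

theorem setIntegral_eq_smul_of_eVariationOn_eq_zero [CompleteSpace E]
    (hf : eVariationOn f s = 0) (hs : MeasurableSet s) {x : α} (hx : x ∈ s) :
    ∫ y in s, f y ∂μ = μ.real s • f x := by
  have hconst (y) (hy : y ∈ s) : f y = f x :=
    edist_eq_zero.mp ((eVariationOn.eq_zero_iff f).mp hf y hy x hx)
  rw [setIntegral_congr_fun hs hconst, setIntegral_const]

end SetIntegral

section RealValued

variable [TopologicalSpace α] [OrderClosedTopology α] [MeasurableSpace α] [BorelSpace α]
  {μ : Measure α} {s : Set α} {f : α → ℝ}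

theorem aemeasurable_restrict_of_locallyBoundedVariationOn (hf : LocallyBoundedVariationOn f s)
    (hs : MeasurableSet s) : AEMeasurable f (μ.restrict s) := by
  obtain ⟨p, q, hp, hq, rfl⟩ := hf.exists_monotoneOn_sub_monotoneOn
  exact (aemeasurable_restrict_of_monotoneOn hs hp).sub (aemeasurable_restrict_of_monotoneOn hs hq)

theorem integrableOn_of_boundedVariationOn (hf : BoundedVariationOn f s) (hs : MeasurableSet s)
    (hμs : μ s ≠ ⊤) : IntegrableOn f s μ := by
  obtain rfl | ⟨z, hz⟩ := s.eq_empty_or_nonempty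
  · exact integrableOn_empty
  refine .of_bound hμs.lt_top
    (aemeasurable_restrict_of_locallyBoundedVariationOn hf.locallyBoundedVariationOn
      hs).aestronglyMeasurable (‖f z‖ + (eVariationOn f s).toReal) ?_
  filter_upwards [ae_restrict_mem hs] with x hx
  calc ‖f x‖ ≤ ‖f z‖ + ‖f x - f z‖ := norm_le_norm_add_norm_sub' _ _
    _ ≤ ‖f z‖ + (eVariationOn f s).toReal := by
        grw [← dist_eq_norm, hf.dist_le hx hz]

end RealValued

end BoundedVariation

theorem limitF_one_sub (L : ℝ) (v : ℝ → ℝ) : limitF L (fun x ↦ 1 - v x) = limitF L v := by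
  have hvar : eVariationOn (fun x ↦ 1 - v x) (Ioo 0 L) = eVariationOn v (Ioo 0 L) :=
    eVariationOn_isometry_comp (IsometryEquiv.subLeft (1 : ℝ)).isometry v _
  have hset : {x ∈ Ioo 0 L | 0 < 1 - v x ∧ 1 - v x < 1} = {x ∈ Ioo 0 L | 0 < v x ∧ v x < 1} := by
    simp only [sub_pos, sub_lt_self_iff, and_comm]
  rw [limitF, limitF, hvar, hset]

theorem eVariationOn_eq_zero_of_limitF_le {L : ℝ} {v : ℝ → ℝ} (hL : 0 ≤ L)
    (hbv : BoundedVariationOn v (Ioo 0 L)) (hv01 : ∀ x ∈ Ioo 0 L, 0 < v x ∧ v x < 1)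
    (hF : limitF L v ≤ 2 * L) : eVariationOn v (Ioo 0 L) = 0 := by
  have hset : {x ∈ Ioo 0 L | 0 < v x ∧ v x < 1} = Ioo 0 L := sep_eq_self_iff_mem_true.mpr hv01
  have hle : 2 * L + (eVariationOn v (Ioo 0 L)).toReal ≤ 2 * L := by
    rwa [limitF, hset, ← measureReal_def, Real.volume_real_Ioo_of_le hL, sub_zero] at hF
  have hV : (eVariationOn v (Ioo 0 L)).toReal = 0 :=
    (nonpos_of_add_le_right hle).antisymm ENNReal.toReal_nonneg
  exact ((ENNReal.toReal_eq_zero_iff _).mp hV).resolve_right hbv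

namespace Adm

variable {L σ : ℝ} {v : ℝ → ℝ}

theorem one_sub (hv : Adm L σ v) (hL : 0 ≤ L) : Adm L (1 - σ) (fun x ↦ 1 - v x) := by
  obtain ⟨hv01, hbv, hint⟩ := hv
  refine ⟨fun x hx ↦ ⟨sub_nonneg.mpr (hv01 x hx).2, sub_le_self 1 (hv01 x hx).1⟩,
    (IsometryEquiv.subLeft (1 : ℝ)).isometry.lipschitz.comp_boundedVariationOn hbv, ?_⟩
  have hvI : IntegrableOn v (Ioo 0 L) :=
    integrableOn_of_boundedVariationOn hbv measurableSet_Ioo measure_Ioo_lt_top.ne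
  rw [integral_sub (integrable_const 1) hvI, setIntegral_one_eq_measureReal,
    Real.volume_real_Ioo_of_le hL, hint]
  ring

theorem pos_of_limitF_le (hv : Adm L σ v) (hL : L < 1 / 2) (hσ : L / 2 < σ)
    (hF : limitF L v ≤ 2 * L) {x : ℝ} (hx : x ∈ Ioo 0 L) : 0 < v x := by
  obtain ⟨hv01, hbv, hint⟩ := hv
  refine (hv01 x hx).1.lt_of_ne' fun hvx ↦ hσ.not_ge ?_
  set V := (eVariationOn v (Ioo 0 L)).toReal
  set t := volume.real {x ∈ Ioo 0 L | 0 < v x ∧ v x < 1}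
  have ht : 0 ≤ t := measureReal_nonneg
  have hVt : 2 * t + V ≤ 2 * L := hF
  have hlt (y) (hy : y ∈ Ioo 0 L) : v y < 1 := by linarith [hbv.sub_le hy hx]
  have hset : Ioo 0 L ∩ Function.support v = {y ∈ Ioo 0 L | 0 < v y ∧ v y < 1} :=
    sep_ext_iff.mpr fun y hy ↦
      (hv01 y hy).1.lt_iff_ne'.symm.trans (and_iff_left (hlt y hy)).symm
  have hmass : σ * L ≤ V * t := by
    rw [← hint]
    refine (Real.le_norm_self _).trans ?_
    simpa only [hset] using norm_setIntegral_le_toReal_eVariationOn_mul (μ := volume) hbv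
      measurableSet_Ioo measure_Ioo_lt_top.ne hx hvx
  refine le_of_mul_le_mul_right ?_ (hx.1.trans hx.2)
  calc σ * L ≤ V * t := hmass
    _ ≤ (2 * L - 2 * t) * t := by gcongr; linarith
    _ ≤ L / 2 * L := by linarith [sq_nonneg (L - 2 * t)]

theorem lt_one_of_limitF_le (hv : Adm L σ v) (hL : L < 1 / 2) (hσ : σ < 1 - L / 2)
    (hF : limitF L v ≤ 2 * L) {x : ℝ} (hx : x ∈ Ioo 0 L) : v x < 1 :=
  sub_pos.mp <| (hv.one_sub (hx.1.trans hx.2).le).pos_of_limitF_le hL (by linarith)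
    ((limitF_one_sub L v).trans_le hF) hx

theorem eq_of_eVariationOn_eq_zero (hv : Adm L σ v) (hV : eVariationOn v (Ioo 0 L) = 0)
    {x : ℝ} (hx : x ∈ Ioo 0 L) : v x = σ := by
  have hL : 0 < L := hx.1.trans hx.2
  refine mul_right_cancel₀ hL.ne' ?_
  calc v x * L = volume.real (Ioo 0 L) • v x := by
        rw [Real.volume_real_Ioo_of_le hL.le, sub_zero, smul_eq_mul, mul_comm]
    _ = ∫ y in Ioo 0 L, v y :=
        (setIntegral_eq_smul_of_eVariationOn_eq_zero hV measurableSet_Ioo hx).symm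
    _ = σ * L := hv.2.2

end Adm

theorem small_domain_unique_minimizer_general {L σ : ℝ} {v : ℝ → ℝ} (hL : L < 1 / 2)
    (hσ : L / 2 < σ) (hσ' : σ < 1 - L / 2) (hv : Adm L σ v) (hF : limitF L v ≤ 2 * L) :
    ∀ x ∈ Ioo 0 L, v x = σ := by
  intro x hx
  have hv01 (y) (hy : y ∈ Ioo 0 L) : 0 < v y ∧ v y < 1 :=
    ⟨hv.pos_of_limitF_le hL hσ hF hy, hv.lt_one_of_limitF_le hL hσ' hF hy⟩
  exact hv.eq_of_eVariationOn_eq_zero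
    (eVariationOn_eq_zero_of_limitF_le (hx.1.trans hx.2).le hv.2.1 hv01 hF) hx

/-- Uniqueness of the minimizer in small domains: for `0 < L < 1/2` and `L/2 < σ ≤ 1/2`,
any `v ∈ Adm(L,σ)` with `F^L(v) = 2L` equals the constant `σ` a.e. on `(0,L)`. -/
theorem small_domain_unique_minimizer (L σ : ℝ)
    (hL1 : 0 < L) (hL2 : L < 1 / 2) (hσ1 : L / 2 < σ) (hσ2 : σ ≤ 1 / 2)
    (v : ℝ → ℝ) (hv : Adm L σ v) (hmin : limitF L v = 2 * L) :
    ∀ᵐ x ∂(volume.restrict (Set.Ioo 0 L)), v x = σ := by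
  filter_upwards [ae_restrict_mem measurableSet_Ioo] with x hx
  exact small_domain_unique_minimizer_general hL2 hσ1 (by linarith) hv hmin.le x hx
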